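/- For all n, m ≥ 0 and generic tuples ū=(u_1,…,u_n), v̄=(v_1,…,v_m), the multiple action of the modified operator ν_{21} on a modified Bethe vector is ν_{21}(ū) ν_{12}(v̄) |0⟩ = Σ_{w̄ ⇒ {w̄_I, w̄_II, w̄_III}} (−β_1)^{n−l_I}(−β_2)^{n−l_II} λ_2(w̄_I)·λ_1(w̄_II)·K^{(1)}_{n,l_I}(ū | w̄_I + c)·\bar{K}^{(1)}_{n,l_II}(ū | w̄_II − c)·f(w̄_I, w̄_II)·f(w̄_I, w̄_III)·f(w̄_III, w̄_II)·ν_{12}(w̄_III) |0⟩, where w̄ = {ū, v̄}, the sum runs over all partitions of w̄ into three disjoint subtuples with no restriction on cardinalities, l_I = #w̄_I, and l_II = #w̄_II. -/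

import Mathlib

open scoped BigOperators

noncomputable section

/-- The rational function `g(u,v) = c/(u-v)`. -/
def gC (c u v : ℂ) : ℂ := c / (u - v)

/-- The rational function `f(u,v) = (u-v+c)/(u-v)`. -/
def fC (c u v : ℂ) : ℂ := (u - v + c) / (u - v)

/-- The rational function `h(u,v) = (u-v+c)/c`. -/
def hC (c u v : ℂ) : ℂ := (u - v + c) / c

/-- A family of parameters is generic if all pairwise differences avoid `0, ±c, ±2c`. -/
def Generic (c : ℂ) {ι : Type*} (w : ι → ℂ) : Prop :=
  ∀ i j, i ≠ j → w i - w j ≠ 0 ∧ w i - w j ≠ c ∧ w i - w j ≠ -c ∧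
    w i - w j ≠ 2 * c ∧ w i - w j ≠ -2 * c

/-- The modified Izergin determinant `K^{(z)}(x̄|ȳ)`. -/
def KIz (c z : ℂ) {ι κ : Type*} [Fintype ι] [Fintype κ] [DecidableEq κ]
    (x : ι → ℂ) (y : κ → ℂ) : ℂ :=
  Matrix.det (Matrix.of fun j k : κ =>
    -z * (if j = k then 1 else 0) +
      (∏ i, fC c (x i) (y j)) * (∏ i ∈ Finset.univ.erase j, fC c (y j) (y i))
        / hC c (y j) (y k))

/-- The conjugated modified Izergin determinant: `c` is replaced by `-c`. -/
def KIzBar (c z : ℂ) {ι κ : Type*} [Fintype ι] [Fintype κ] [DecidableEq κ]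
    (x : ι → ℂ) (y : κ → ℂ) : ℂ :=
  KIz (-c) z x y

/-- Restriction of a tuple to a subtuple indexed by a `Finset`. -/
def restr {p : ℕ} (w : Fin p → ℂ) (s : Finset (Fin p)) : {x // x ∈ s} → ℂ :=
  fun i => w i.1

/-- Double product `f(w̄_s, w̄_t)` over two subtuples of a tuple. -/
def fSS (c : ℂ) {p : ℕ} (w : Fin p → ℂ) (s t : Finset (Fin p)) : ℂ :=
  ∏ i ∈ s, ∏ j ∈ t, fC c (w i) (w j)

/-- Ordered product of operators over a subtuple (the operators pairwise commute,
so the order is irrelevant). -/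
def opProd {V : Type*} [AddCommGroup V] [Module ℂ V] {p : ℕ}
    (op : ℂ → Module.End ℂ V) (w : Fin p → ℂ) (s : Finset (Fin p)) : Module.End ℂ V :=
  ((s.sort (· ≤ ·)).map (fun i => op (w i))).prod

/-- The index subsets of a partition of `Fin p` into three parts. -/
def parts {p : ℕ} (σ : Fin p → Fin 3) (k : Fin 3) : Finset (Fin p) :=
  Finset.univ.filter (fun i => σ i = k)

section Abs
variable {ι : Type*} [DecidableEq ι] {V : Type*} [AddCommGroup V] [Module ℂ V]

theorem prod_f_expand (f g : ι → ι → ℂ) (hf : ∀ i j, f i j = 1 + g i j)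
    (h3 : ∀ i j k, i ≠ j → i ≠ k → j ≠ k → g i k * g j k = g i k * g j i + g j k * g i j)
    (T : Finset ι) : ∀ u, u ∉ T →
    ∏ i ∈ T, f i u = 1 + ∑ e ∈ T, g e u * ∏ i ∈ T.erase e, f i e := by
  induction T using Finset.induction_on with
  | empty => intro u _; simp
  | insert b T hb ih =>
    intro u hu
    simp only [Finset.mem_insert, not_or] at hu
    rw [Finset.prod_insert hb, Finset.sum_insert hb, Finset.erase_insert hb, ih b hb, ih u hu.2]
    have : ∑ e ∈ T, g e u * ∏ i ∈ (insert b T).erase e, f i e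
        = ∑ e ∈ T, g e u * (f b e * ∏ i ∈ T.erase e, f i e) := by
      refine Finset.sum_congr rfl fun e he => ?_
      have hbe : b ≠ e := fun h => hb (h ▸ he)
      rw [Finset.erase_insert_of_ne hbe, Finset.prod_insert (by simp [hb])]
    rw [this, hf b u, mul_add, mul_add, Finset.mul_sum, Finset.mul_sum, add_assoc, mul_one, mul_one,
      add_assoc, ← Finset.sum_add_distrib]
    congr 2
    refine Finset.sum_congr rfl fun e he => ?_
    have hbe : b ≠ e := fun h => hb (h ▸ he)
    have heu : e ≠ u := fun h => hu.2 (h ▸ he)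
    have := h3 b e u hbe (Ne.symm hu.1) heu
    rw [hf b e]
    linear_combination (∏ i ∈ T.erase e, f i e) * this

theorem act_one (f g : ι → ι → ℂ) (hf : ∀ i j, f i j = 1 + g i j)
    (hanti : ∀ i j, g i j = - g j i)
    (h3 : ∀ i j k, i ≠ j → i ≠ k → j ≠ k → g i k * g j k = g i k * g j i + g j k * g i j)
    (B D : ι → Module.End ℂ V) (vac : V) (lam : ι → ℂ) (P : Finset ι → V)
    (hP0 : P ∅ = vac) (hP : ∀ i s, i ∉ s → P (insert i s) = B i (P s))
    (hD : ∀ i, D i vac = lam i • vac)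
    (hDB : ∀ i j, i ≠ j → ∀ x, D i (B j x) = f i j • B j (D i x) + g j i • B i (D j x))
    (s : Finset ι) : ∀ i, i ∉ s →
    D i (P s) = (lam i * ∏ j ∈ s, f i j) • P s +
      ∑ e ∈ s, (g e i * lam e * ∏ j ∈ s.erase e, f e j) • P (insert i (s.erase e)) := by
  induction s using Finset.induction_on with
  | empty => intro i _; simp [hP0, hD]
  | insert b s hb ih =>
    intro u hu
    simp only [Finset.mem_insert, not_or] at hu
    rw [hP b s hb, hDB u b hu.1, ih u hu.2, ih b hb, Finset.sum_insert hb, Finset.erase_insert hb,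
      Finset.prod_insert hb]
    simp only [map_add, map_sum, map_smul, smul_add, Finset.smul_sum, smul_smul]
    rw [← hP b s hb, ← hP u s hu.2]
    have h1 : ∀ e ∈ s, B b (P (insert u (s.erase e))) = P (insert u ((insert b s).erase e)) := by
      intro e he
      have hbe : b ≠ e := fun h => hb (h ▸ he)
      rw [← hP b _ (by simp [hb, Ne.symm hu.1]), Finset.erase_insert_of_ne hbe, Finset.insert_comm]
    have h2 : ∀ e ∈ s, B u (P (insert b (s.erase e))) = P (insert u ((insert b s).erase e)) := by
      intro e he
      have hbe : b ≠ e := fun h => hb (h ▸ he)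
      rw [← hP u _ (by simp [hu.1, hu.2]), Finset.erase_insert_of_ne hbe]
    have s1 : ∑ e ∈ s, (f u b * (g e u * lam e * ∏ j ∈ s.erase e, f e j)) • B b (P (insert u (s.erase e)))
        = ∑ e ∈ s, (f u b * (g e u * lam e * ∏ j ∈ s.erase e, f e j)) • P (insert u ((insert b s).erase e)) :=
      Finset.sum_congr rfl fun e he => by rw [h1 e he]
    have s2 : ∑ e ∈ s, (g b u * (g e b * lam e * ∏ j ∈ s.erase e, f e j)) • B u (P (insert b (s.erase e)))
        = ∑ e ∈ s, (g b u * (g e b * lam e * ∏ j ∈ s.erase e, f e j)) • P (insert u ((insert b s).erase e)) :=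
      Finset.sum_congr rfl fun e he => by rw [h2 e he]
    rw [s1, s2]
    have h4 : ∀ e ∈ s, (g e u * lam e * ∏ j ∈ (insert b s).erase e, f e j) • P (insert u ((insert b s).erase e))
      = (f u b * (g e u * lam e * ∏ j ∈ s.erase e, f e j)) • P (insert u ((insert b s).erase e))
       + (g b u * (g e b * lam e * ∏ j ∈ s.erase e, f e j)) • P (insert u ((insert b s).erase e)) := by
      intro e he
      have hbe : b ≠ e := fun h => hb (h ▸ he)
      have heu : e ≠ u := fun h => hu.2 (h ▸ he)
      rw [← add_smul]
      congr 1
      rw [Finset.erase_insert_of_ne hbe, Finset.prod_insert (by simp [hb])]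
      have := h3 b e u hbe (Ne.symm hu.1) heu
      rw [hf e b, hf u b, hanti u b]
      rw [hanti b e] at this
      linear_combination (lam e * ∏ i ∈ s.erase e, f e i) * this
    rw [Finset.sum_congr rfl h4, Finset.sum_add_distrib]
    rw [show f u b * (lam u * ∏ j ∈ s, f u j) = lam u * (f u b * ∏ j ∈ s, f u j) by ring,
      show g b u * (lam b * ∏ j ∈ s, f b j) = g b u * lam b * ∏ j ∈ s, f b j by ring]
    abel

theorem gauge_expand (f g : ι → ι → ℂ) (hf : ∀ i j, f i j = 1 + g i j)
    (hanti : ∀ i j, g i j = - g j i)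
    (h3 : ∀ i j k, i ≠ j → i ≠ k → j ≠ k → g i k * g j k = g i k * g j i + g j k * g i j)
    (B D : ι → Module.End ℂ V) (vac : V) (lam : ι → ℂ) (P : Finset ι → V)
    (hP0 : P ∅ = vac) (hP : ∀ i s, i ∉ s → P (insert i s) = B i (P s))
    (hD : ∀ i, D i vac = lam i • vac)
    (hDB : ∀ i j, i ≠ j → ∀ x, D i (B j x) = f i j • B j (D i x) + g j i • B i (D j x))
    (a : ℂ) (Q : Finset ι → V)
    (hQ0 : Q ∅ = vac) (hQ : ∀ i s, i ∉ s → Q (insert i s) = B i (Q s) + a • D i (Q s))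
    (s : Finset ι) :
    Q s = ∑ T ∈ s.powerset, (a ^ T.card * (∏ i ∈ T, lam i) * ∏ i ∈ T, ∏ j ∈ s \ T, f i j) •
      P (s \ T) := by
  induction s using Finset.induction_on with
  | empty => simp [hP0, hQ0]
  | insert u s hu ih =>
    rw [hQ u s hu, ih, Finset.sum_powerset_insert hu]
    simp only [map_sum, map_smul, Finset.smul_sum]
    have e1 : ∀ T ∈ s.powerset, (insert u s) \ T = insert u (s \ T) := by
      intro T hT
      rw [Finset.mem_powerset] at hT
      rw [Finset.insert_sdiff_of_notMem _ (fun h => hu (hT h))]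
    have e2 : ∀ T ∈ s.powerset, (insert u s) \ (insert u T) = s \ T := by
      intro T hT
      ext x; simp only [Finset.mem_sdiff, Finset.mem_insert]; grind
    have hBB : ∀ T ∈ s.powerset, B u (P (s \ T)) = P (insert u (s \ T)) := by
      intro T hT; rw [hP u _ (by simp [hu])]
    have hDD : ∀ T ∈ s.powerset, a • (a ^ T.card * (∏ i ∈ T, lam i) * ∏ i ∈ T, ∏ j ∈ s \ T, f i j) • D u (P (s \ T))
      = (a ^ (insert u T).card * (∏ i ∈ insert u T, lam i) * ∏ i ∈ insert u T, ∏ j ∈ insert u s \ insert u T, f i j) •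
        P (insert u s \ insert u T) + ∑ e ∈ s \ T,
          (a * (a ^ T.card * (∏ i ∈ T, lam i) * ∏ i ∈ T, ∏ j ∈ s \ T, f i j) *
           (g e u * lam e * ∏ j ∈ (s \ T).erase e, f e j)) • P (insert u ((s \ T).erase e)) := by
      intro T hT
      have hT' := Finset.mem_powerset.1 hT
      have huT : u ∉ T := fun h => hu (hT' h)
      rw [act_one f g hf hanti h3 B D vac lam P hP0 hP hD hDB (s \ T) u (by simp [hu])]
      simp only [smul_add, Finset.smul_sum, smul_smul]
      rw [e2 T hT, Finset.card_insert_of_notMem huT, Finset.prod_insert huT, Finset.prod_insert huT]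
      congr 1
      · congr 1
        ring
      · exact Finset.sum_congr rfl fun e _ => by rw [mul_assoc a]
    rw [Finset.sum_congr rfl hDD, Finset.sum_add_distrib]
    have hBB' : ∑ T ∈ s.powerset, (a ^ T.card * (∏ i ∈ T, lam i) * ∏ i ∈ T, ∏ j ∈ s \ T, f i j) • B u (P (s \ T))
        = ∑ T ∈ s.powerset, (a ^ T.card * (∏ i ∈ T, lam i) * ∏ i ∈ T, ∏ j ∈ s \ T, f i j) • P (insert u (s \ T)) :=
      Finset.sum_congr rfl fun T hT => by rw [hBB T hT]
    rw [hBB', ← add_assoc, add_right_comm]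
    congr 1
    have hR : ∀ T ∈ s.powerset, (a ^ T.card * (∏ i ∈ T, lam i) * ∏ i ∈ T, ∏ j ∈ insert u s \ T, f i j) •
          P (insert u s \ T) =
        (a ^ T.card * (∏ i ∈ T, lam i) * ∏ i ∈ T, ∏ j ∈ s \ T, f i j) • P (insert u (s \ T)) +
        ∑ e ∈ T, (a ^ T.card * (∏ i ∈ T, lam i) * (∏ i ∈ T, ∏ j ∈ s \ T, f i j) *
          (g e u * ∏ i ∈ T.erase e, f i e)) • P (insert u (s \ T)) := by
      intro T hT
      have hT' := Finset.mem_powerset.1 hT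
      have huT : u ∉ T := fun h => hu (hT' h)
      rw [e1 T hT, ← Finset.sum_smul, ← add_smul, ← Finset.mul_sum]
      congr 1
      have hpr : ∏ i ∈ T, ∏ j ∈ insert u (s \ T), f i j = ∏ i ∈ T, (f i u * ∏ j ∈ s \ T, f i j) :=
        Finset.prod_congr rfl fun i _ => Finset.prod_insert (by simp [hu])
      rw [hpr, Finset.prod_mul_distrib, prod_f_expand f g hf h3 T u huT]
      ring
    rw [Finset.sum_congr rfl hR, Finset.sum_add_distrib]
    congr 1
    rw [Finset.sum_sigma', Finset.sum_sigma']
    refine Finset.sum_nbij' (fun x => ⟨insert x.2 x.1, x.2⟩) (fun x => ⟨x.1.erase x.2, x.2⟩) ?_ ?_ ?_ ?_ ?_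
    · rintro ⟨T, e⟩ h
      simp only [Finset.mem_sigma, Finset.mem_powerset, Finset.mem_sdiff] at h ⊢
      exact ⟨Finset.insert_subset h.2.1 h.1, Finset.mem_insert_self _ _⟩
    · rintro ⟨T, e⟩ h
      simp only [Finset.mem_sigma, Finset.mem_powerset, Finset.mem_sdiff] at h ⊢
      exact ⟨(Finset.erase_subset _ _).trans h.1, h.1 h.2, by simp⟩
    · rintro ⟨T, e⟩ h
      simp only [Finset.mem_sigma, Finset.mem_powerset, Finset.mem_sdiff] at h ⊢
      simp [Finset.erase_insert h.2.2]
    · rintro ⟨T, e⟩ h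
      simp only [Finset.mem_sigma, Finset.mem_powerset, Finset.mem_sdiff] at h ⊢
      simp [Finset.insert_erase h.2]
    · rintro ⟨T, e⟩ h
      simp only [Finset.mem_sigma, Finset.mem_powerset, Finset.mem_sdiff] at h ⊢
      obtain ⟨hT, he, heT⟩ := h
      have hs : s \ insert e T = (s \ T).erase e := Finset.sdiff_insert _ _ _
      rw [hs, Finset.card_insert_of_notMem heT, Finset.prod_insert heT, Finset.prod_insert heT,
        Finset.erase_insert heT]
      congr 1
      have : ∏ i ∈ T, ∏ j ∈ s \ T, f i j = (∏ i ∈ T, f i e) * ∏ i ∈ T, ∏ j ∈ (s \ T).erase e, f i j := by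
        rw [← Finset.prod_mul_distrib]
        refine Finset.prod_congr rfl fun i _ => ?_
        rw [Finset.mul_prod_erase (s \ T) (fun j => f i j) (by simp [he, heT])]
      rw [this]
      generalize (∏ i ∈ T, ∏ j ∈ (s \ T).erase e, f i j) = x1
      generalize (∏ j ∈ (s \ T).erase e, f e j) = x2
      generalize (∏ i ∈ T, f i e) = x3
      generalize (∏ i ∈ T, lam i) = x4
      ring
end Abs

theorem cauchy_det (c : ℂ) (hc : c ≠ 0) (κ : Type) [Fintype κ] : ∀ [DecidableEq κ] (y : κ → ℂ),
    (∀ i j, i ≠ j → y i - y j ≠ 0 ∧ y i - y j ≠ -c) →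
    Matrix.det (Matrix.of fun j k : κ => 1 / hC c (y j) (y k)) *
      ∏ j, ∏ k, (if j = k then 1 else fC c (y j) (y k)) = 1 := by
  refine Fintype.induction_empty_option (P := fun κ _ => ∀ [DecidableEq κ] (y : κ → ℂ),
    (∀ i j, i ≠ j → y i - y j ≠ 0 ∧ y i - y j ≠ -c) →
    Matrix.det (Matrix.of fun j k : κ => 1 / hC c (y j) (y k)) *
      ∏ j, ∏ k, (if j = k then 1 else fC c (y j) (y k)) = 1) ?_ ?_ ?_ κ
  · intro α β _ e ih _ y hy
    let := Fintype.ofEquiv β e.symm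
    let : DecidableEq α := Classical.decEq _
    have := ih (y ∘ e) (fun i j hij => hy _ _ (fun h => hij (e.injective h)))
    refine Eq.trans ?_ this
    congr 1
    · rw [← Matrix.det_submatrix_equiv_self e]
      rfl
    · symm
      refine Fintype.prod_equiv e _ _ fun i => ?_
      refine Fintype.prod_equiv e _ _ fun j => ?_
      simp
  · intro _ y hy; simp
  · intro α _ ih _ y hy
    let : DecidableEq α := Classical.decEq _
    have ih' := ih (fun i => y (some i)) (fun i j hij => hy _ _ (by simpa using hij))
    have hn : ∀ i, fC c (y (some i)) (y none) ≠ 0 := by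
      intro i
      obtain ⟨h1, h2⟩ := hy (some i) none (by simp)
      refine div_ne_zero (fun h => h2 (by linear_combination h)) h1
    have hn' : ∀ i, fC c (y none) (y (some i)) ≠ 0 := by
      intro i
      obtain ⟨h1, h2⟩ := hy none (some i) (by simp)
      refine div_ne_zero (fun h => h2 (by linear_combination h)) h1
    have key : Matrix.det (Matrix.of fun j k : Option α => 1 / hC c (y j) (y k)) =
        (∏ i, (fC c (y (some i)) (y none))⁻¹) * ((∏ i, (fC c (y none) (y (some i)))⁻¹) *
          Matrix.det (Matrix.of fun j k : α => 1 / hC c (y (some j)) (y (some k)))) := by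
      rw [← Matrix.det_submatrix_equiv_self ((Equiv.sumComm Unit α).trans (Equiv.optionEquivSumPUnit α).symm)]
      have : (Matrix.of fun j k : Option α => 1 / hC c (y j) (y k)).submatrix
         ((Equiv.sumComm Unit α).trans (Equiv.optionEquivSumPUnit α).symm)
         ((Equiv.sumComm Unit α).trans (Equiv.optionEquivSumPUnit α).symm) =
         Matrix.fromBlocks 1 (Matrix.of fun (_ : Unit) (k : α) => 1 / hC c (y none) (y (some k)))
          (Matrix.of fun (k : α) (_ : Unit) => 1 / hC c (y (some k)) (y none))
          (Matrix.of fun j k : α => 1 / hC c (y (some j)) (y (some k))) := by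
        ext i j
        rcases i with i | i <;> rcases j with j | j <;> simp [Matrix.fromBlocks, hC, hc]
      rw [this, Matrix.det_fromBlocks_one₁₁, ← Matrix.det_mul_row, ← Matrix.det_mul_column]
      congr 1
      ext i j
      simp only [Matrix.sub_apply, Matrix.of_apply, Matrix.mul_apply, Finset.univ_unique, Finset.sum_singleton]
      obtain ⟨h1, h2⟩ := hy none (some j) (by simp)
      obtain ⟨h3, h4⟩ := hy (some i) none (by simp)
      have h5 : y (some i) - y (some j) + c ≠ 0 := by
        by_cases hij : i = j
        · simpa [hij] using hc
        · intro h; exact (hy (some i) (some j) (by simpa using hij)).2 (by linear_combination h)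
      have h2' : y none - y (some j) + c ≠ 0 := fun h => h2 (by linear_combination h)
      have h4' : y (some i) - y none + c ≠ 0 := fun h => h4 (by linear_combination h)
      simp only [hC, fC]
      field_simp
      ring
    rw [key, Fintype.prod_option, Fintype.prod_option]
    have e1 : ∀ i : α, (∏ k : Option α, if some i = k then 1 else fC c (y (some i)) (y k)) =
       fC c (y (some i)) (y none) * ∏ k : α, if i = k then 1 else fC c (y (some i)) (y (some k)) := by
      intro i; rw [Fintype.prod_option]; simp
    simp only [e1, Finset.prod_mul_distrib, Finset.prod_inv_distrib]
    have p1 : ∏ i, fC c (y (some i)) (y none) ≠ 0 := Finset.prod_ne_zero_iff.2 fun i _ => hn i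
    have p2 : ∏ i, fC c (y none) (y (some i)) ≠ 0 := Finset.prod_ne_zero_iff.2 fun i _ => hn' i
    simp only [if_true, reduceCtorEq, if_false, one_mul]
    field_simp
    linear_combination ih'

theorem det_add_diag {κ : Type} [Fintype κ] [DecidableEq κ] (d : ℂ) (M : Matrix κ κ ℂ) :
    Matrix.det (Matrix.of fun j k => d * (if j = k then 1 else 0) + M j k) =
      ∑ S : Finset κ, d ^ (Sᶜ.card) * Matrix.det (Matrix.of fun (i j : {x // x ∈ S}) => M i j) := by
  have h := (Matrix.detRowAlternating (R := ℂ) (n := κ)).toMultilinearMap.map_add_univ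
    (fun j k => M j k) (fun j k => d * (if j = k then 1 else 0))
  have e : Matrix.det (Matrix.of fun j k => d * (if j = k then 1 else 0) + M j k) =
     (Matrix.detRowAlternating (R := ℂ) (n := κ)).toMultilinearMap
       ((fun j k => M j k) + (fun j k => d * (if j = k then 1 else 0))) := by
    change Matrix.det _ = Matrix.det _
    congr 1
    ext j k
    simp [add_comm]
  rw [e, h]
  refine Finset.sum_congr rfl fun S _ => ?_
  set A : Matrix κ κ ℂ := Matrix.of fun j k => if j ∈ S then M j k else d * (if j = k then 1 else 0) with hA
  have e5 : (S.piecewise (fun j k => M j k) (fun j k => d * (if j = k then 1 else 0)) : κ → κ → ℂ) = A := by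
    funext j k
    by_cases hj : j ∈ S <;> simp [Finset.piecewise, hA, hj]
  rw [e5]
  change Matrix.det A = _
  rw [Matrix.twoBlockTriangular_det _ (fun x => x ∈ S)]
  · rw [mul_comm]
    congr 1
    · have : (Matrix.toSquareBlockProp A fun x => ¬ x ∈ S)
        = Matrix.diagonal fun _ => d := by
        ext i j
        simp [Matrix.toSquareBlockProp, Matrix.diagonal, hA, i.2, Subtype.ext_iff]
      rw [this, Matrix.det_diagonal]
      simp [Finset.card_compl]
    · have h6 : Matrix.toSquareBlockProp A (fun x => x ∈ S) = Matrix.of fun (i j : {x // x ∈ S}) => M i j := by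
        ext i j
        simp [Matrix.toSquareBlockProp, hA]
      rw [h6]
      convert rfl
  · intro i hi j hj
    have : i ≠ j := fun h => hi (h ▸ hj)
    simp [hA, hi, this]

theorem KIz_expand (c : ℂ) (hc : c ≠ 0) {ι : Type*} {κ : Type} [Fintype ι] [Fintype κ] [DecidableEq κ]
    (x : ι → ℂ) (y : κ → ℂ)
    (hy : ∀ i j, i ≠ j → y i - y j ≠ 0 ∧ y i - y j ≠ -c) :
    KIz c 1 x y = ∑ S : Finset κ, (-1) ^ (Sᶜ.card) * (∏ j ∈ S, ∏ i, fC c (x i) (y j)) *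
      ∏ j ∈ S, ∏ k ∈ Sᶜ, fC c (y j) (y k) := by
  unfold KIz
  have := det_add_diag (-1) (Matrix.of fun j k : κ => (∏ i, fC c (x i) (y j)) * (∏ i ∈ Finset.univ.erase j, fC c (y j) (y i))
        / hC c (y j) (y k))
  simp only [Matrix.of_apply] at this
  rw [this]
  refine Finset.sum_congr rfl fun S _ => ?_
  rw [mul_assoc]
  congr 1
  have hS := cauchy_det c hc {x // x ∈ S} (fun i => y i) (fun i j hij => hy _ _ (fun h => hij (Subtype.ext h)))
  have e : (Matrix.of fun (i j : {x // x ∈ S}) => (∏ k, fC c (x k) (y i)) * (∏ k ∈ Finset.univ.erase (i : κ), fC c (y i) (y k))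
        / hC c (y i) (y j)) = Matrix.of fun (i j : {x // x ∈ S}) => ((∏ k, fC c (x k) (y i)) * (∏ k ∈ Finset.univ.erase (i : κ), fC c (y i) (y k))) *
          (Matrix.of fun j k : {x // x ∈ S} => 1 / hC c (y j) (y k)) i j := by
    ext i j
    simp [div_eq_mul_inv]
  rw [e, Matrix.det_mul_column, Finset.prod_mul_distrib]
  have e2 : ∏ j ∈ S, ∏ i, fC c (x i) (y j) = ∏ j : {x // x ∈ S}, ∏ i, fC c (x i) (y j) :=
    (Finset.prod_coe_sort S (fun j => ∏ i, fC c (x i) (y j))).symm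
  have e3 : ∏ j ∈ S, ∏ k ∈ Sᶜ, fC c (y j) (y k) = ∏ j : {x // x ∈ S}, ∏ k ∈ Sᶜ, fC c (y j) (y k) :=
    (Finset.prod_coe_sort S (fun j => ∏ k ∈ Sᶜ, fC c (y j) (y k))).symm
  have e4 : ∏ i : {x // x ∈ S}, ∏ k ∈ Finset.univ.erase (i : κ), fC c (y i) (y k) =
     (∏ j : {x // x ∈ S}, ∏ k ∈ Sᶜ, fC c (y j) (y k)) *
      ∏ j : {x // x ∈ S}, ∏ k : {x // x ∈ S}, (if j = k then 1 else fC c (y j) (y k)) := by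
    rw [← Finset.prod_mul_distrib]
    refine Finset.prod_congr rfl fun i _ => ?_
    have : ∏ k : {x // x ∈ S}, (if i = k then 1 else fC c (y i) (y k)) = ∏ k ∈ S, (if (i : κ) = k then 1 else fC c (y i) (y k)) := by
      rw [← Finset.prod_coe_sort S]
      refine Finset.prod_congr rfl fun k _ => ?_
      simp only [Subtype.ext_iff]
    rw [this]
    have h7 : ∏ k ∈ Finset.univ.erase (i : κ), fC c (y i) (y k) = ∏ k, (if (i : κ) = k then 1 else fC c (y i) (y k)) := by
      rw [← Finset.mul_prod_erase Finset.univ _ (Finset.mem_univ (i : κ))]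
      simp only [if_true, one_mul]
      refine Finset.prod_congr rfl fun k hk => ?_
      rw [if_neg (Ne.symm (Finset.ne_of_mem_erase hk))]
    rw [h7, mul_comm, ← Finset.prod_mul_prod_compl S]
    congr 1
    refine Finset.prod_congr rfl fun k hk => ?_
    rw [if_neg]
    rintro rfl
    exact (Finset.mem_compl.1 hk) i.2
  rw [e2, e3, e4]
  linear_combination ((∏ j : {x // x ∈ S}, ∏ i, fC c (x i) (y j)) * (∏ j : {x // x ∈ S}, ∏ k ∈ Sᶜ, fC c (y j) (y k))) * hS

theorem chain_step {ι : Type*} [DecidableEq ι] {V : Type*} [AddCommGroup V] [Module ℂ V]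
    (f g : ι → ι → ℂ) (hf : ∀ i j, f i j = 1 + g i j)
    (hanti : ∀ i j, g i j = - g j i)
    (h3 : ∀ i j k, i ≠ j → i ≠ k → j ≠ k → g i k * g j k = g i k * g j i + g j k * g i j)
    (P Q : ι → Module.End ℂ V) (vac : V) (lam : ι → ℂ) (p q : Finset ι → V)
    (hp0 : p ∅ = vac) (hp : ∀ i s, i ∉ s → p (insert i s) = P i (p s))
    (hq0 : q ∅ = vac) (hq : ∀ i s, i ∉ s → q (insert i s) = Q i (q s))
    (hPP : ∀ i j, P i * P j = P j * P i)
    (hQP : ∀ i j, i ≠ j → Q i * P j = f i j • (P j * Q i) + g j i • (P i * Q j))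
    (α δ γ γ' a : ℂ) (hD : ∀ i, α • Q i vac + δ • P i vac = lam i • vac)
    (h1 : a * α = γ') (h2 : γ + a * δ = 0) (s : Finset ι) :
    γ' ^ s.card • q s = ∑ T ∈ s.powerset, (a ^ T.card * (∏ i ∈ T, lam i) * ∏ i ∈ T, ∏ j ∈ s \ T, f i j) •
      (γ ^ (s \ T).card • p (s \ T)) := by
  refine gauge_expand f g hf hanti h3 (fun i => γ • P i) (fun i => α • Q i + δ • P i) vac lam
    (fun s => γ ^ s.card • p s) (by simp [hp0]) ?_ (by simpa using hD) ?_ a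
    (fun s => γ' ^ s.card • q s) (by simp [hq0]) ?_ s
  · intro i s hi
    simp only [Finset.card_insert_of_notMem hi, hp i s hi, LinearMap.smul_apply, map_smul, smul_smul]
    ring_nf
  · intro i j hij x
    have e1 : Q i (P j x) = f i j • (P j (Q i x)) + g j i • (P i (Q j x)) := by
      simpa using congrArg (fun F => F x) (hQP i j hij)
    have e2 : P i (P j x) = P j (P i x) := by
      simpa using congrArg (fun F => F x) (hPP i j)
    have e3 : g j i = 1 - f i j := by rw [hf, hanti]; ring
    simp only [LinearMap.smul_apply, LinearMap.add_apply, map_add, map_smul, e1, e2, e3]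
    module
  · intro i s hi
    simp only [Finset.card_insert_of_notMem hi, hq i s hi, LinearMap.smul_apply, LinearMap.add_apply, map_smul, smul_smul]
    have : γ = - (a * δ) := by linear_combination h2
    subst this
    subst h1
    module

section Op
variable {V : Type*} [AddCommGroup V] [Module ℂ V]

theorem opProd_empty {p : ℕ} (op : ℂ → Module.End ℂ V) (w : Fin p → ℂ) : opProd op w ∅ = 1 := by
  simp [opProd]

theorem opProd_insert {p : ℕ} (op : ℂ → Module.End ℂ V) (hop : ∀ x y, op x * op y = op y * op x)
    (w : Fin p → ℂ) (i : Fin p) (s : Finset (Fin p)) (hi : i ∉ s) :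
    opProd op w (insert i s) = op (w i) * opProd op w s := by
  unfold opProd
  have h : ((insert i s).sort (· ≤ ·)).Perm (i :: s.sort (· ≤ ·)) := by
    rw [List.perm_ext_iff_of_nodup (Finset.sort_nodup _ _) (List.nodup_cons.2 ⟨by simpa using hi, Finset.sort_nodup _ _⟩)]
    simp
  rw [(h.map (fun i => op (w i))).prod_eq']
  · simp
  · rw [List.pairwise_map]
    exact List.pairwise_of_forall fun _ _ => hop _ _

theorem opProd_map {p q : ℕ} (op : ℂ → Module.End ℂ V) (hop : ∀ x y, op x * op y = op y * op x)
    (w : Fin p → ℂ) (e : Fin q ↪ Fin p) (s : Finset (Fin q)) :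
    opProd op w (s.map e) = opProd op (fun i => w (e i)) s := by
  induction s using Finset.induction_on with
  | empty => simp [opProd_empty]
  | insert i s hi ih =>
    rw [Finset.map_insert, opProd_insert op hop _ _ _ (by simpa using hi), opProd_insert op hop _ _ _ hi, ih]

theorem opProd_union {p : ℕ} (op : ℂ → Module.End ℂ V) (hop : ∀ x y, op x * op y = op y * op x)
    (w : Fin p → ℂ) (s t : Finset (Fin p)) (h : Disjoint s t) :
    opProd op w (s ∪ t) = opProd op w s * opProd op w t := by
  induction s using Finset.induction_on with
  | empty => simp [opProd_empty]
  | insert i s hi ih =>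
    rw [Finset.disjoint_insert_left] at h
    rw [Finset.insert_union, opProd_insert op hop _ _ _ (by simp [hi, h.1]), opProd_insert op hop _ _ _ hi, ih h.2, mul_assoc]
end Op

theorem fC_eq (c x y : ℂ) (h : x ≠ y) : fC c x y = 1 + gC c x y := by
  have : x - y ≠ 0 := sub_ne_zero.2 h
  unfold fC gC; field_simp

theorem fSS_union_left (c : ℂ) {p : ℕ} (w : Fin p → ℂ) (s s' t : Finset (Fin p)) (h : Disjoint s s') :
    fSS c w (s ∪ s') t = fSS c w s t * fSS c w s' t := by
  unfold fSS; rw [Finset.prod_union h]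

theorem fSS_union_right (c : ℂ) {p : ℕ} (w : Fin p → ℂ) (s t t' : Finset (Fin p)) (h : Disjoint t t') :
    fSS c w s (t ∪ t') = fSS c w s t * fSS c w s t' := by
  unfold fSS; rw [← Finset.prod_mul_distrib]
  exact Finset.prod_congr rfl fun i _ => Finset.prod_union h

theorem sum_finset_subtype {α M : Type*} [DecidableEq α] [Fintype α] [AddCommMonoid M] (I : Finset α) (G : Finset α → M) :
    ∑ S : Finset {x // x ∈ I}, G (S.map (Function.Embedding.subtype _)) = ∑ S ∈ I.powerset, G S := by
  refine Finset.sum_nbij' (fun S => S.map (Function.Embedding.subtype _)) (fun T => T.subtype (· ∈ I)) ?_ ?_ ?_ ?_ ?_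
  · intro S _
    rw [Finset.mem_powerset]
    intro x hx
    simp only [Finset.mem_map, Function.Embedding.subtype_apply] at hx
    obtain ⟨a, _, rfl⟩ := hx
    exact a.2
  · intro S _; simp
  · intro S _
    ext x; simp
  · intro S hS
    rw [Finset.mem_powerset] at hS
    exact Finset.subtype_map_of_mem fun x hx => hS hx
  · intro S _; rfl

theorem KIz_restr (c : ℂ) (hc : c ≠ 0) {n p : ℕ} (u : Fin n → ℂ) (w : Fin p → ℂ)
    (hw : ∀ i j, i ≠ j → w i - w j ≠ 0 ∧ w i - w j ≠ -c) (I : Finset (Fin p)) :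
    KIz c 1 u (fun i => restr w I i + c) =
      ∑ S ∈ I.powerset, (-1) ^ (I \ S).card * (∏ j ∈ S, ∏ i, fC c (u i) (w j + c)) * fSS c w S (I \ S) := by
  rw [KIz_expand c hc u _ (by
    intro i j hij
    simpa [restr] using hw i j (fun h => hij (Subtype.ext h)))]
  rw [← sum_finset_subtype]
  refine Finset.sum_congr rfl fun S _ => ?_
  have h : I \ S.map (Function.Embedding.subtype _) = Sᶜ.map (Function.Embedding.subtype _) := by
    ext x
    by_cases hx : x ∈ I <;> simp [hx]
  rw [h, Finset.card_map, Finset.prod_map]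
  unfold fSS
  rw [Finset.prod_map]
  simp only [Finset.prod_map, restr, Function.Embedding.subtype_apply]
  congr 1
  refine Finset.prod_congr rfl fun i _ => Finset.prod_congr rfl fun j _ => ?_
  simp [fC]

theorem fSS_neg (c : ℂ) {p : ℕ} (w : Fin p → ℂ) (s t : Finset (Fin p)) : fSS (-c) w s t = fSS c w t s := by
  unfold fSS
  rw [Finset.prod_comm]
  refine Finset.prod_congr rfl fun i _ => Finset.prod_congr rfl fun j _ => ?_
  unfold fC
  rw [← neg_div_neg_eq]; congr 1 <;> ring

theorem KIzBar_restr (c : ℂ) (hc : c ≠ 0) {n p : ℕ} (u : Fin n → ℂ) (w : Fin p → ℂ)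
    (hw : ∀ i j, i ≠ j → w i - w j ≠ 0 ∧ w i - w j ≠ c) (I : Finset (Fin p)) :
    KIzBar c 1 u (fun i => restr w I i - c) =
      ∑ S ∈ I.powerset, (-1) ^ (I \ S).card * (∏ j ∈ S, ∏ i, fC (-c) (u i) (w j - c)) * fSS c w (I \ S) S := by
  unfold KIzBar
  have := KIz_restr (-c) (neg_ne_zero.2 hc) u w (by simpa using hw) I
  simpa only [← sub_eq_add_neg, fSS_neg] using this

theorem sum_parts {p : ℕ} {M : Type*} [AddCommMonoid M] (F : Finset (Fin p) → Finset (Fin p) → Finset (Fin p) → M) :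
    ∑ σ : Fin p → Fin 3, F (parts σ 0) (parts σ 1) (parts σ 2) =
      ∑ I ∈ (Finset.univ : Finset (Fin p)).powerset, ∑ J ∈ (Finset.univ \ I).powerset, F I J ((Finset.univ \ I) \ J) := by
  rw [Finset.sum_sigma']
  refine Finset.sum_nbij' (fun σ => ⟨parts σ 0, parts σ 1⟩)
    (fun x => fun i => if i ∈ x.1 then 0 else if i ∈ x.2 then 1 else 2) ?_ ?_ ?_ ?_ ?_
  · intro σ _
    simp only [Finset.mem_sigma, Finset.mem_powerset, Finset.subset_univ, true_and]
    intro x hx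
    simp only [parts, Finset.mem_filter, Finset.mem_univ, true_and, Finset.mem_sdiff] at hx ⊢
    simp [hx]
  · intro _ _; simp
  · intro σ _
    funext i
    simp only [parts, Finset.mem_filter, Finset.mem_univ, true_and]
    generalize σ i = k
    fin_cases k <;> simp
  · rintro ⟨I, J⟩ h
    simp only [Finset.mem_sigma, Finset.mem_powerset, Finset.subset_univ, true_and] at h
    have h1 : parts (fun i => if i ∈ I then (0 : Fin 3) else if i ∈ J then 1 else 2) 0 = I := by
      ext x; simp only [parts, Finset.mem_filter, Finset.mem_univ, true_and]
      split_ifs <;> simp_all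
    have h2 : parts (fun i => if i ∈ I then (0 : Fin 3) else if i ∈ J then 1 else 2) 1 = J := by
      ext x; simp only [parts, Finset.mem_filter, Finset.mem_univ, true_and]
      by_cases hx : x ∈ J
      · have := h hx
        simp at this
        simp [hx, this]
      · split_ifs <;> simp_all
    simp only [h1, h2]
  · intro σ _
    congr 1
    ext x
    simp only [parts, Finset.mem_filter, Finset.mem_univ, true_and, Finset.mem_sdiff]
    generalize σ x = k
    fin_cases k <;> simp

theorem sum_reindex {α M : Type*} [DecidableEq α] [Fintype α] [AddCommMonoid M]
    (G : Finset α → Finset α → Finset α → Finset α → M) :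
    ∑ C ∈ (Finset.univ : Finset α).powerset, ∑ A ∈ (Finset.univ \ C).powerset,
      ∑ B ∈ ((Finset.univ \ C) \ A).powerset, ∑ D ∈ (((Finset.univ \ C) \ A) \ B).powerset, G A B C D =
    ∑ I ∈ (Finset.univ : Finset α).powerset, ∑ J ∈ (Finset.univ \ I).powerset,
      ∑ A ∈ I.powerset, ∑ C ∈ J.powerset, G A (I \ A) C (J \ C) := by
  simp only [Finset.sum_sigma']
  refine Finset.sum_nbij' (fun x => ⟨x.2.1 ∪ x.2.2.1, x.1 ∪ x.2.2.2, x.2.1, x.1⟩)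
    (fun x => ⟨x.2.2.2, x.2.2.1, x.1 \ x.2.2.1, x.2.1 \ x.2.2.2⟩) ?_ ?_ ?_ ?_ ?_
  · rintro ⟨C, A, B, D⟩ h
    simp only [Finset.mem_sigma, Finset.mem_powerset, Finset.subset_iff, Finset.mem_sdiff, Finset.mem_union, Finset.mem_univ] at h ⊢
    grind
  · rintro ⟨I, J, A, C⟩ h
    simp only [Finset.mem_sigma, Finset.mem_powerset, Finset.subset_iff, Finset.mem_sdiff, Finset.mem_union, Finset.mem_univ] at h ⊢
    grind
  · rintro ⟨C, A, B, D⟩ h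
    simp only [Finset.mem_sigma, Finset.mem_powerset, Finset.subset_iff, Finset.mem_sdiff, Finset.mem_union, Finset.mem_univ] at h
    have h1 : (A ∪ B) \ A = B := by ext x; simp only [Finset.mem_sdiff, Finset.mem_union]; grind
    have h2 : (C ∪ D) \ C = D := by ext x; simp only [Finset.mem_sdiff, Finset.mem_union]; grind
    simp only [h1, h2]
  · rintro ⟨I, J, A, C⟩ h
    simp only [Finset.mem_sigma, Finset.mem_powerset] at h
    simp only [Finset.union_sdiff_of_subset h.2.2.1, Finset.union_sdiff_of_subset h.2.2.2]
  · rintro ⟨C, A, B, D⟩ h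
    simp only [Finset.mem_sigma, Finset.mem_powerset, Finset.subset_iff, Finset.mem_sdiff, Finset.mem_union, Finset.mem_univ] at h
    have h1 : (A ∪ B) \ A = B := by ext x; simp only [Finset.mem_sdiff, Finset.mem_union]; grind
    have h2 : (C ∪ D) \ C = D := by ext x; simp only [Finset.mem_sdiff, Finset.mem_union]; grind
    simp only [h1, h2]

theorem fC_neg (c x y : ℂ) : fC (-c) x y = fC c y x := by
  unfold fC
  rw [← neg_div_neg_eq]; congr 1 <;> ring

theorem gC_neg (c x y : ℂ) : gC (-c) x y = gC c y x := by
  unfold gC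
  rw [← neg_div_neg_eq]; congr 1 <;> ring

theorem gC_anti (c x y : ℂ) : gC c x y = - gC c y x := by
  unfold gC
  rw [← neg_sub y x, div_neg]

theorem fSS_split_left (c : ℂ) {p : ℕ} (w : Fin p → ℂ) (s t r : Finset (Fin p)) (h : s ⊆ t) :
    fSS c w t r = fSS c w s r * fSS c w (t \ s) r := by
  rw [← fSS_union_left c w s (t \ s) r Finset.disjoint_sdiff, Finset.union_sdiff_of_subset h]

theorem fSS_split_right (c : ℂ) {p : ℕ} (w : Fin p → ℂ) (s t r : Finset (Fin p)) (h : s ⊆ t) :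
    fSS c w r t = fSS c w r s * fSS c w r (t \ s) := by
  rw [← fSS_union_right c w r s (t \ s) Finset.disjoint_sdiff, Finset.union_sdiff_of_subset h]

theorem op_step {V : Type*} [AddCommGroup V] [Module ℂ V] (c : ℂ) {p : ℕ} (w : Fin p → ℂ)
    (hw : ∀ i j, i ≠ j → w i ≠ w j) (P Q : ℂ → Module.End ℂ V)
    (hPP : ∀ x y, P x * P y = P y * P x) (hQQ : ∀ x y, Q x * Q y = Q y * Q x)
    (hQP : ∀ x y, x ≠ y → Q x * P y = fC c x y • (P y * Q x) + gC c y x • (P x * Q y))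
    (vac : V) (lam : ℂ → ℂ)
    (α δ γ γ' a : ℂ) (hD : ∀ x, α • Q x vac + δ • P x vac = lam x • vac)
    (h1 : a * α = γ') (h2 : γ + a * δ = 0) (s : Finset (Fin p)) :
    γ' ^ s.card • opProd Q w s vac = ∑ T ∈ s.powerset,
      (a ^ T.card * (∏ i ∈ T, lam (w i)) * fSS c w T (s \ T)) •
      (γ ^ (s \ T).card • opProd P w (s \ T) vac) := by
  rw [chain_step (fun i j => 1 + gC c (w i) (w j)) (fun i j => gC c (w i) (w j)) (fun _ _ => rfl)
    (fun i j => gC_anti c _ _) ?_ (fun i => P (w i)) (fun i => Q (w i)) vac (fun i => lam (w i))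
    (fun s => opProd P w s vac) (fun s => opProd Q w s vac) (by simp [opProd_empty])
    (fun i s hi => by simp [opProd_insert P hPP w i s hi]) (by simp [opProd_empty])
    (fun i s hi => by simp [opProd_insert Q hQQ w i s hi])
    (fun i j => hPP _ _) ?_ α δ γ γ' a (fun i => hD _) h1 h2 s]
  · refine Finset.sum_congr rfl fun T hT => ?_
    congr 2
    unfold fSS
    refine Finset.prod_congr rfl fun i hi => Finset.prod_congr rfl fun j hj => ?_
    rw [fC_eq]
    refine hw i j ?_
    rintro rfl
    exact (Finset.mem_sdiff.1 hj).2 hi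
  · intro i j k hij hik hjk
    have h1 := sub_ne_zero.2 (hw i j hij)
    have h1' := sub_ne_zero.2 (hw j i hij.symm)
    have h2 := sub_ne_zero.2 (hw i k hik)
    have h3 := sub_ne_zero.2 (hw j k hjk)
    rw [gC_anti c (w j) (w i)]
    simp only [gC]
    field_simp
    ring
  · intro i j hij
    rw [hQP _ _ (hw i j hij), fC_eq _ _ _ (hw i j hij)]

theorem pow_aux (β : ℂ) (hβ : β ≠ 0) (n a b l : ℕ) (h : l = a + b) :
    (-β) ^ ((n : ℤ) - (l : ℤ)) * (-1) ^ b = (-β) ^ n * (-β⁻¹) ^ a * (β⁻¹) ^ b := by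
  have h' : -β ≠ 0 := neg_ne_zero.2 hβ
  subst h
  rw [zpow_sub₀ h', zpow_natCast, zpow_natCast, pow_add]
  have : (β⁻¹ : ℂ) ^ b = ((-β)⁻¹) ^ b * (-1) ^ b := by
    rw [← mul_pow]; congr 1; field_simp
  rw [this, show (-β⁻¹ : ℂ) = (-β)⁻¹ from neg_inv]
  rw [inv_pow, inv_pow]
  field_simp

/-- coefficient of the five-partition expansion -/
def coef5 (c β1 β2 : ℂ) (lam1 lam2 : ℂ → ℂ) {n p : ℕ} (u : Fin n → ℂ) (w : Fin p → ℂ)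
    (A B C D E : Finset (Fin p)) : ℂ :=
  (β1 * β2) ^ n * (-β1⁻¹) ^ A.card * (β1⁻¹) ^ B.card * (-β2⁻¹) ^ C.card * (β2⁻¹) ^ D.card *
    (∏ i ∈ A, lam2 (w i)) * (∏ i ∈ B, lam2 (w i)) * (∏ i ∈ C, lam1 (w i)) * (∏ i ∈ D, lam1 (w i)) *
    (∏ j ∈ A, ∏ i, fC c (u i) (w j + c)) * (∏ j ∈ C, ∏ i, fC (-c) (u i) (w j - c)) *
    (fSS c w A B * fSS c w A D * fSS c w A E) *
    (fSS c w A C * fSS c w B C * fSS c w D C * fSS c w E C) *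
    (fSS c w B D * fSS c w B E) * fSS c w E D

theorem set_aux {α : Type*} [DecidableEq α] [Fintype α] (I J A C : Finset α)
    (hA : A ⊆ I) (hC : C ⊆ J) :
    (Finset.univ \ I) \ J = (((Finset.univ \ C) \ A) \ (I \ A)) \ (J \ C) := by
  ext x
  have h1 := @hA x
  have h2 := @hC x
  simp only [Finset.mem_sdiff, Finset.mem_univ, true_and]
  tauto

theorem rhs_coef (c β1 β2 : ℂ) (hc : c ≠ 0) (hβ1 : β1 ≠ 0) (hβ2 : β2 ≠ 0) (lam1 lam2 : ℂ → ℂ)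
    {n p : ℕ} (u : Fin n → ℂ) (w : Fin p → ℂ) (hw : Generic c w) (I J E : Finset (Fin p)) :
    ((-β1) ^ ((n : ℤ) - (I.card : ℤ)) * (-β2) ^ ((n : ℤ) - (J.card : ℤ)) *
              (∏ i ∈ I, lam2 (w i)) * (∏ i ∈ J, lam1 (w i)) *
              KIz c 1 u (fun i => restr w I i + c) * KIzBar c 1 u (fun i => restr w J i - c) *
              fSS c w I J * fSS c w I E * fSS c w E J) =
    ∑ A ∈ I.powerset, ∑ C ∈ J.powerset, coef5 c β1 β2 lam1 lam2 u w A (I \ A) C (J \ C) E := by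
  rw [KIz_restr c hc u w (fun i j h => ⟨(hw i j h).1, (hw i j h).2.2.1⟩),
    KIzBar_restr c hc u w (fun i j h => ⟨(hw i j h).1, (hw i j h).2.1⟩)]
  simp only [Finset.mul_sum, Finset.sum_mul]
  rw [Finset.sum_comm]
  refine Finset.sum_congr rfl fun A hA => Finset.sum_congr rfl fun C hC => ?_
  rw [Finset.mem_powerset] at hA hC
  have cA : I.card = A.card + (I \ A).card := by
    rw [Finset.card_sdiff_of_subset hA]; have := Finset.card_le_card hA; omega
  have cC : J.card = C.card + (J \ C).card := by
    rw [Finset.card_sdiff_of_subset hC]; have := Finset.card_le_card hC; omega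
  have q1 := pow_aux β1 hβ1 n _ _ _ cA
  have q2 := pow_aux β2 hβ2 n _ _ _ cC
  have q3 : ((-β1) ^ n * (-β2) ^ n : ℂ) = (β1 * β2) ^ n := by rw [← mul_pow]; ring
  unfold coef5
  rw [fSS_split_left c w A I J hA, fSS_split_right c w C J A hC, fSS_split_right c w C J (I \ A) hC,
    fSS_split_left c w A I E hA, fSS_split_right c w C J E hC,
    ← Finset.prod_sdiff hA (f := fun i => lam2 (w i)), ← Finset.prod_sdiff hC (f := fun i => lam1 (w i)), ← q3]
  generalize (∏ j ∈ A, ∏ i, fC c (u i) (w j + c)) = y1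
  generalize (∏ j ∈ C, ∏ i, fC (-c) (u i) (w j - c)) = y2
  generalize (∏ i ∈ I \ A, lam2 (w i)) = y3
  generalize (∏ i ∈ A, lam2 (w i)) = y4
  generalize (∏ i ∈ J \ C, lam1 (w i)) = y5
  generalize (∏ i ∈ C, lam1 (w i)) = y6
  generalize (-β1) ^ ((n : ℤ) - (I.card : ℤ)) = z1 at *
  generalize (-β2) ^ ((n : ℤ) - (J.card : ℤ)) = z2 at *
  generalize (I \ A).card = ca at *
  generalize (J \ C).card = cc at *
  generalize I \ A = B at *
  generalize J \ C = D at *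
  generalize fSS c w A B = s1
  generalize fSS c w A D = s2
  generalize fSS c w A E = s3
  generalize fSS c w A C = s4
  generalize fSS c w B C = s5
  generalize fSS c w D C = s6
  generalize fSS c w E C = s7
  generalize fSS c w B D = s8
  generalize fSS c w B E = s9
  generalize fSS c w E D = s10
  have q4 := congrArg₂ (· * ·) q1 q2
  beta_reduce at q4
  linear_combination (y1 * y2 * y3 * y4 * y5 * y6 * s1 * s2 * s3 * s4 * s5 * s6 * s7 * s8 * s9 * s10) * q4

theorem lhs_coef (c β1 β2 : ℂ) (lam1 lam2 : ℂ → ℂ)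
    {n p : ℕ} (u : Fin n → ℂ) (w : Fin p → ℂ) (Vv A B C D : Finset (Fin p))
    (hA : A ⊆ Finset.univ \ C) (hB : B ⊆ (Finset.univ \ C) \ A) (hD : D ⊆ ((Finset.univ \ C) \ A) \ B)
    (hφ : fSS c w A ((Vv \ C) \ A) = (∏ j ∈ A, ∏ i, fC c (u i) (w j + c)) * fSS c w A ((Finset.univ \ C) \ A))
    (hψ : fSS c w (Vv \ C) C = (∏ j ∈ C, ∏ i, fC (-c) (u i) (w j - c)) * fSS c w (Finset.univ \ C) C) :
    ((-β2⁻¹) ^ C.card * (∏ i ∈ C, lam1 (w i)) * fSS c w (Vv \ C) C) *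
    (((-β1⁻¹) ^ A.card * (∏ i ∈ A, lam2 (w i)) * fSS c w A ((Vv \ C) \ A)) *
    ((β1 * β2) ^ n * (((β1⁻¹) ^ B.card * (∏ i ∈ B, lam2 (w i)) * fSS c w B (((Finset.univ \ C) \ A) \ B)) *
    ((β2⁻¹) ^ D.card * (∏ i ∈ D, lam1 (w i)) * fSS c w ((((Finset.univ \ C) \ A) \ B) \ D) D)))) =
    coef5 c β1 β2 lam1 lam2 u w A B C D ((((Finset.univ \ C) \ A) \ B) \ D) := by
  rw [hφ, hψ]
  rw [fSS_split_left c w A _ C hA, fSS_split_left c w B _ C hB, fSS_split_left c w D _ C hD,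
    fSS_split_right c w B _ A hB, fSS_split_right c w D _ A hD, fSS_split_right c w D _ B hD]
  unfold coef5
  ring

theorem fC_inv_plus (c x y : ℂ) (h0 : y - x ≠ 0) (h1 : y - x ≠ -c) :
    fC c y x * fC c x (y + c) = 1 := by
  unfold fC
  have h2 : y - x + c ≠ 0 := fun h => h1 (by linear_combination h)
  have h3 : x - (y + c) ≠ 0 := fun h => h1 (by linear_combination -h)
  field_simp
  ring

theorem fC_inv_minus (c x y : ℂ) (h0 : y - x ≠ 0) (h1 : y - x ≠ c) :
    fC c x y * fC (-c) x (y - c) = 1 := by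
  unfold fC
  have h2 : x - y ≠ 0 := fun h => h0 (by linear_combination -h)
  have h3 : x - (y - c) ≠ 0 := fun h => h1 (by linear_combination -h)
  field_simp
  ring

/-- index set of the first block -/
def idxU (n m : ℕ) : Finset (Fin (n + m)) := Finset.univ.map (Fin.castAddEmb m)

/-- index set of the second block -/
def idxV (n m : ℕ) : Finset (Fin (n + m)) := Finset.univ.map (Fin.natAddEmb n)

theorem idx_disj (n m : ℕ) (x : Fin (n + m)) : x ∈ idxU n m ↔ x ∉ idxV n m := by
  refine Fin.addCases (fun i => ?_) (fun j => ?_) x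
  · simp only [idxU, idxV, Finset.mem_map, Finset.mem_univ, true_and, Fin.castAddEmb_apply, Fin.natAddEmb_apply]
    refine ⟨fun _ => ?_, fun _ => ⟨i, rfl⟩⟩
    rintro ⟨a, ha⟩
    have := congrArg Fin.val ha
    simp at this
    have := i.2
    omega
  · simp only [idxU, idxV, Finset.mem_map, Finset.mem_univ, true_and, Fin.castAddEmb_apply, Fin.natAddEmb_apply]
    refine ⟨?_, fun h => absurd ⟨j, rfl⟩ h⟩
    rintro ⟨a, ha⟩
    have := congrArg Fin.val ha
    simp at this
    have := a.2
    omega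

theorem univ_split1 {n m : ℕ} (C : Finset (Fin (n + m))) (hC : C ⊆ idxV n m) :
    Finset.univ \ C = idxU n m ∪ (idxV n m \ C) := by
  ext x
  have h1 := @hC x
  have h2 := idx_disj n m x
  simp only [Finset.mem_sdiff, Finset.mem_univ, true_and, Finset.mem_union]
  tauto

theorem disj_split {n m : ℕ} (T : Finset (Fin (n + m))) (hT : T ⊆ idxV n m) :
    Disjoint (idxU n m) T := by
  rw [Finset.disjoint_left]
  intro x hx hxT
  exact (idx_disj n m x).1 hx (hT hxT)

theorem univ_split2 {n m : ℕ} (A C : Finset (Fin (n + m))) (hC : C ⊆ idxV n m) (hA : A ⊆ idxV n m \ C) :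
    (Finset.univ \ C) \ A = idxU n m ∪ ((idxV n m \ C) \ A) := by
  ext x
  have h1 := @hC x
  have h2 := idx_disj n m x
  have h3 := @hA x
  simp only [Finset.mem_sdiff, Finset.mem_univ, true_and, Finset.mem_union] at h3 ⊢
  tauto

theorem phi_eq (c : ℂ) {n m : ℕ} (u : Fin n → ℂ) (v : Fin m → ℂ)
    (hgen : Generic c (Fin.append u v)) (A C : Finset (Fin (n + m)))
    (hC : C ⊆ idxV n m) (hA : A ⊆ idxV n m \ C) :
    fSS c (Fin.append u v) A ((idxV n m \ C) \ A) =
      (∏ j ∈ A, ∏ i, fC c (u i) (Fin.append u v j + c)) *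
        fSS c (Fin.append u v) A ((Finset.univ \ C) \ A) := by
  have hAV : A ⊆ idxV n m := hA.trans Finset.sdiff_subset
  have key : (∏ j ∈ A, ∏ i, fC c (u i) (Fin.append u v j + c)) * fSS c (Fin.append u v) A (idxU n m) = 1 := by
    unfold fSS
    rw [← Finset.prod_mul_distrib]
    refine Finset.prod_eq_one fun j hj => ?_
    unfold idxU
    rw [Finset.prod_map, ← Finset.prod_mul_distrib]
    refine Finset.prod_eq_one fun i _ => ?_
    have hne : j ≠ Fin.castAdd m i := by
      rintro rfl
      exact (idx_disj n m _).1 (by simp [idxU]) (hAV hj)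
    have h := hgen _ _ hne
    rw [Fin.append_left] at h
    rw [Fin.castAddEmb_apply, Fin.append_left, mul_comm]
    exact fC_inv_plus c _ _ h.1 h.2.2.1
  rw [univ_split2 A C hC hA, fSS_union_right _ _ _ _ _
    (disj_split _ (Finset.sdiff_subset.trans Finset.sdiff_subset)), ← mul_assoc, key, one_mul]

theorem psi_eq (c : ℂ) {n m : ℕ} (u : Fin n → ℂ) (v : Fin m → ℂ)
    (hgen : Generic c (Fin.append u v)) (C : Finset (Fin (n + m)))
    (hC : C ⊆ idxV n m) :
    fSS c (Fin.append u v) (idxV n m \ C) C =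
      (∏ j ∈ C, ∏ i, fC (-c) (u i) (Fin.append u v j - c)) *
        fSS c (Fin.append u v) (Finset.univ \ C) C := by
  have key : (∏ j ∈ C, ∏ i, fC (-c) (u i) (Fin.append u v j - c)) * fSS c (Fin.append u v) (idxU n m) C = 1 := by
    unfold fSS
    rw [Finset.prod_comm (s := idxU n m), ← Finset.prod_mul_distrib]
    refine Finset.prod_eq_one fun j hj => ?_
    unfold idxU
    rw [Finset.prod_map, ← Finset.prod_mul_distrib]
    refine Finset.prod_eq_one fun i _ => ?_
    have hne : j ≠ Fin.castAdd m i := by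
      rintro rfl
      exact (idx_disj n m _).1 (by simp [idxU]) (hC hj)
    have h := hgen _ _ hne
    rw [Fin.append_left] at h
    rw [Fin.castAddEmb_apply, Fin.append_left, mul_comm]
    exact fC_inv_minus c _ _ h.1 h.2.1
  rw [univ_split1 C hC, fSS_union_left _ _ _ _ _
    (disj_split _ Finset.sdiff_subset), ← mul_assoc, key, one_mul]

theorem phi_zero (c : ℂ) {n m : ℕ} (u : Fin n → ℂ) (v : Fin m → ℂ) (A : Finset (Fin (n + m)))
    (hA : ¬ A ⊆ idxV n m) : (∏ j ∈ A, ∏ i, fC c (u i) (Fin.append u v j + c)) = 0 := by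
  rw [Finset.not_subset] at hA
  obtain ⟨x, hx, hx'⟩ := hA
  rw [← idx_disj] at hx'
  simp only [idxU, Finset.mem_map, Finset.mem_univ, true_and, Fin.castAddEmb_apply] at hx'
  obtain ⟨i, rfl⟩ := hx'
  refine Finset.prod_eq_zero hx (Finset.prod_eq_zero (Finset.mem_univ i) ?_)
  rw [Fin.append_left]
  simp [fC]

theorem psi_zero (c : ℂ) {n m : ℕ} (u : Fin n → ℂ) (v : Fin m → ℂ) (A : Finset (Fin (n + m)))
    (hA : ¬ A ⊆ idxV n m) : (∏ j ∈ A, ∏ i, fC (-c) (u i) (Fin.append u v j - c)) = 0 := by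
  have := phi_zero (-c) u v A hA
  simpa only [← sub_eq_add_neg] using this

theorem sum_extend {n m : ℕ} {M : Type*} [AddCommMonoid M]
    (F : Finset (Fin (n + m)) → Finset (Fin (n + m)) → M)
    (hA : ∀ A C, ¬ A ⊆ idxV n m → F A C = 0) (hC : ∀ A C, ¬ C ⊆ idxV n m → F A C = 0) :
    ∑ C ∈ (idxV n m).powerset, ∑ A ∈ (idxV n m \ C).powerset, F A C =
    ∑ C ∈ (Finset.univ : Finset (Fin (n + m))).powerset, ∑ A ∈ (Finset.univ \ C).powerset, F A C := by
  have h1 : ∀ C : Finset (Fin (n + m)), ∑ A ∈ (idxV n m \ C).powerset, F A C = ∑ A ∈ (Finset.univ \ C).powerset, F A C := by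
    intro C
    refine Finset.sum_subset (Finset.powerset_mono.2 (Finset.sdiff_subset_sdiff (Finset.subset_univ _) subset_rfl)) ?_
    intro A h h'
    rw [Finset.mem_powerset] at h h'
    refine hA A C fun hAV => h' fun x hx => ?_
    exact Finset.mem_sdiff.2 ⟨hAV hx, (Finset.mem_sdiff.1 (h hx)).2⟩
  rw [Finset.sum_congr rfl fun C _ => h1 C]
  refine Finset.sum_subset (Finset.powerset_mono.2 (Finset.subset_univ _)) ?_
  intro C h h'
  rw [Finset.mem_powerset] at h'
  exact Finset.sum_eq_zero fun A _ => hC A C h'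

section Steps
variable {V : Type*} [AddCommGroup V] [Module ℂ V]

theorem step_E1 (c β1 β2 : ℂ) (hβ2 : β2 ≠ 0)
    (N : Fin 2 → Fin 2 → ℂ → Module.End ℂ V) (vac : V) (lam1 : ℂ → ℂ)
    (hYang : ∀ (i j k l : Fin 2) (x y : ℂ), x ≠ y →
      N i j x * N k l y - N k l y * N i j x
        = gC c x y • (N k j y * N i l x - N k j x * N i l y))
    (hCommSame : ∀ (i j : Fin 2) (x y : ℂ), N i j x * N i j y = N i j y * N i j x)
    (hvac11 : ∀ x : ℂ, N 0 0 x vac = lam1 x • vac + β2 • (N 0 1 x vac))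
    {p : ℕ} (w : Fin p → ℂ) (hw : ∀ i j, i ≠ j → w i ≠ w j) (s : Finset (Fin p)) :
    (β2⁻¹) ^ s.card • opProd (N 0 0) w s vac = ∑ D ∈ s.powerset,
      ((β2⁻¹) ^ D.card * (∏ i ∈ D, lam1 (w i)) * fSS c w (s \ D) D) • opProd (N 0 1) w (s \ D) vac := by
  have h := op_step (-c) w hw (N 0 1) (N 0 0) (hCommSame 0 1) (hCommSame 0 0) ?_ vac lam1
    1 (-β2) 1 (β2⁻¹) (β2⁻¹) ?_ ?_ ?_ s
  · simpa only [fSS_neg, one_pow, one_smul] using h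
  · intro x y hxy
    have h := hYang 0 1 0 0 y x hxy.symm
    rw [fC_neg, gC_neg, fC_eq _ _ _ hxy.symm, gC_anti c x y]
    linear_combination (norm := module) -h
  · intro x; rw [hvac11]; module
  · simp
  · field_simp; simp

theorem step_E4 (c β1 β2 : ℂ) (hβ2 : β2 ≠ 0)
    (N : Fin 2 → Fin 2 → ℂ → Module.End ℂ V) (vac : V) (lam1 : ℂ → ℂ)
    (hYang : ∀ (i j k l : Fin 2) (x y : ℂ), x ≠ y →
      N i j x * N k l y - N k l y * N i j x
        = gC c x y • (N k j y * N i l x - N k j x * N i l y))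
    (hCommSame : ∀ (i j : Fin 2) (x y : ℂ), N i j x * N i j y = N i j y * N i j x)
    (hvac11 : ∀ x : ℂ, N 0 0 x vac = lam1 x • vac + β2 • (N 0 1 x vac))
    {p : ℕ} (w : Fin p → ℂ) (hw : ∀ i j, i ≠ j → w i ≠ w j) (s : Finset (Fin p)) :
    opProd (N 0 1) w s vac = ∑ C ∈ s.powerset,
      ((-β2⁻¹) ^ C.card * (∏ i ∈ C, lam1 (w i)) * fSS c w (s \ C) C) •
        ((β2⁻¹) ^ (s \ C).card • opProd (N 0 0) w (s \ C) vac) := by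
  have h := op_step (-c) w hw (N 0 0) (N 0 1) (hCommSame 0 0) (hCommSame 0 1) ?_ vac lam1
    (-β2) 1 (β2⁻¹) 1 (-β2⁻¹) ?_ ?_ ?_ s
  · simpa only [fSS_neg, one_pow, one_smul] using h
  · intro x y hxy
    have h := hYang 0 0 0 1 y x hxy.symm
    rw [fC_neg, gC_neg, fC_eq _ _ _ hxy.symm, gC_anti c x y]
    linear_combination (norm := module) -h
  · intro x; rw [hvac11]; module
  · field_simp
  · simp

theorem step_E2 (c β1 β2 : ℂ) (hβ1 : β1 ≠ 0) (hβ2 : β2 ≠ 0)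
    (N : Fin 2 → Fin 2 → ℂ → Module.End ℂ V) (vac : V) (lam1 lam2 : ℂ → ℂ)
    (hYang : ∀ (i j k l : Fin 2) (x y : ℂ), x ≠ y →
      N i j x * N k l y - N k l y * N i j x
        = gC c x y • (N k j y * N i l x - N k j x * N i l y))
    (hCommSame : ∀ (i j : Fin 2) (x y : ℂ), N i j x * N i j y = N i j y * N i j x)
    (hvac11 : ∀ x : ℂ, N 0 0 x vac = lam1 x • vac + β2 • (N 0 1 x vac))
    (hvac21 : ∀ x : ℂ, N 1 0 x vac
      = (β1 * lam1 x + β2 * lam2 x) • vac + (β1 * β2) • (N 0 1 x vac))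
    {p : ℕ} (w : Fin p → ℂ) (hw : ∀ i j, i ≠ j → w i ≠ w j) (s : Finset (Fin p)) :
    ((β1 * β2)⁻¹) ^ s.card • opProd (N 1 0) w s vac = ∑ B ∈ s.powerset,
      ((β1⁻¹) ^ B.card * (∏ i ∈ B, lam2 (w i)) * fSS c w B (s \ B)) •
        ((β2⁻¹) ^ (s \ B).card • opProd (N 0 0) w (s \ B) vac) := by
  refine op_step c w hw (N 0 0) (N 1 0) (hCommSame 0 0) (hCommSame 1 0) ?_ vac lam2
    (β2⁻¹) (-β2⁻¹ * β1) (β2⁻¹) ((β1 * β2)⁻¹) (β1⁻¹) ?_ ?_ ?_ s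
  · intro x y hxy
    have h := hYang 1 0 0 0 x y hxy
    rw [fC_eq _ _ _ hxy, gC_anti c y x]
    linear_combination (norm := module) h
  · intro x; rw [hvac11, hvac21]
    match_scalars <;> field_simp <;> ring
  · rw [mul_inv]
  · field_simp; simp

theorem step_E3 (c β1 β2 : ℂ) (hβ1 : β1 ≠ 0) (hβ2 : β2 ≠ 0)
    (N : Fin 2 → Fin 2 → ℂ → Module.End ℂ V) (vac : V) (lam1 lam2 : ℂ → ℂ)
    (hYang : ∀ (i j k l : Fin 2) (x y : ℂ), x ≠ y →
      N i j x * N k l y - N k l y * N i j x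
        = gC c x y • (N k j y * N i l x - N k j x * N i l y))
    (hCommSame : ∀ (i j : Fin 2) (x y : ℂ), N i j x * N i j y = N i j y * N i j x)
    (hvac11 : ∀ x : ℂ, N 0 0 x vac = lam1 x • vac + β2 • (N 0 1 x vac))
    (hvac21 : ∀ x : ℂ, N 1 0 x vac
      = (β1 * lam1 x + β2 * lam2 x) • vac + (β1 * β2) • (N 0 1 x vac))
    {p : ℕ} (w : Fin p → ℂ) (hw : ∀ i j, i ≠ j → w i ≠ w j) (s : Finset (Fin p)) :
    (β2⁻¹) ^ s.card • opProd (N 0 0) w s vac = ∑ A ∈ s.powerset,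
      ((-β1⁻¹) ^ A.card * (∏ i ∈ A, lam2 (w i)) * fSS c w A (s \ A)) •
        (((β1 * β2)⁻¹) ^ (s \ A).card • opProd (N 1 0) w (s \ A) vac) := by
  refine op_step c w hw (N 1 0) (N 0 0) (hCommSame 1 0) (hCommSame 0 0) ?_ vac lam2
    (-β2⁻¹ * β1) (β2⁻¹) ((β1 * β2)⁻¹) (β2⁻¹) (-β1⁻¹) ?_ ?_ ?_ s
  · intro x y hxy
    have h := hYang 0 0 1 0 x y hxy
    rw [fC_eq _ _ _ hxy, gC_anti c y x]
    linear_combination (norm := module) h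
  · intro x; rw [hvac11, hvac21]
    match_scalars <;> field_simp <;> ring
  · field_simp
  · field_simp; simp

end Steps

/-- Multiple action of the modified operator `ν₂₁` on a modified Bethe vector:
a sum over partitions of the combined tuple into three subtuples. -/
theorem stmt4
    (c : ℂ) (hc : c ≠ 0) (β1 β2 : ℂ) (hβ1 : β1 ≠ 0) (hβ2 : β2 ≠ 0)
    (V : Type*) [AddCommGroup V] [Module ℂ V]
    (N : Fin 2 → Fin 2 → ℂ → Module.End ℂ V)
    (vac : V) (lam1 lam2 : ℂ → ℂ)
    (hYang : ∀ (i j k l : Fin 2) (x y : ℂ), x ≠ y →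
      N i j x * N k l y - N k l y * N i j x
        = gC c x y • (N k j y * N i l x - N k j x * N i l y))
    (hCommSame : ∀ (i j : Fin 2) (x y : ℂ), N i j x * N i j y = N i j y * N i j x)
    (hvac11 : ∀ x : ℂ, N 0 0 x vac = lam1 x • vac + β2 • (N 0 1 x vac))
    (hvac22 : ∀ x : ℂ, N 1 1 x vac = lam2 x • vac + β1 • (N 0 1 x vac))
    (hvac21 : ∀ x : ℂ, N 1 0 x vac
      = (β1 * lam1 x + β2 * lam2 x) • vac + (β1 * β2) • (N 0 1 x vac))
    (n m : ℕ) (u : Fin n → ℂ) (v : Fin m → ℂ)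
    (hgen : Generic c (Fin.append u v)) :
    (opProd (N 1 0) u Finset.univ * opProd (N 0 1) v Finset.univ) vac
      = ∑ σ : Fin (n + m) → Fin 3,
          ((-β1) ^ ((n : ℤ) - ((parts σ 0).card : ℤ)) *
              (-β2) ^ ((n : ℤ) - ((parts σ 1).card : ℤ)) *
              (∏ i ∈ parts σ 0, lam2 (Fin.append u v i)) *
              (∏ i ∈ parts σ 1, lam1 (Fin.append u v i)) *
              KIz c 1 u (fun i => restr (Fin.append u v) (parts σ 0) i + c) *
              KIzBar c 1 u (fun i => restr (Fin.append u v) (parts σ 1) i - c) *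
              fSS c (Fin.append u v) (parts σ 0) (parts σ 1) *
              fSS c (Fin.append u v) (parts σ 0) (parts σ 2) *
              fSS c (Fin.append u v) (parts σ 2) (parts σ 1)) •
            (opProd (N 0 1) (Fin.append u v) (parts σ 2) vac) := by
  set w := Fin.append u v with hwdef
  have hw : ∀ i j, i ≠ j → w i ≠ w j := fun i j h => sub_ne_zero.1 (hgen i j h).1
  have E1 := step_E1 c β1 β2 hβ2 N vac lam1 hYang hCommSame hvac11 w hw
  have E2 := step_E2 c β1 β2 hβ1 hβ2 N vac lam1 lam2 hYang hCommSame hvac11 hvac21 w hw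
  have E3 := step_E3 c β1 β2 hβ1 hβ2 N vac lam1 lam2 hYang hCommSame hvac11 hvac21 w hw
  have E4 := step_E4 c β1 β2 hβ2 N vac lam1 hYang hCommSame hvac11 w hw
  have hU : opProd (N 1 0) u Finset.univ = opProd (N 1 0) w (idxU n m) := by
    unfold idxU
    rw [opProd_map _ (hCommSame 1 0)]
    congr 1; funext i
    rw [Fin.castAddEmb_apply, hwdef, Fin.append_left]
  have hV : opProd (N 0 1) v Finset.univ = opProd (N 0 1) w (idxV n m) := by
    unfold idxV
    rw [opProd_map _ (hCommSame 0 1)]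
    congr 1; funext i
    rw [Fin.natAddEmb_apply, hwdef, Fin.append_right]
  have hcardU : (idxU n m).card = n := by simp [idxU]
  -- merging the two products of `ν₂₁`
  have merge : ∀ C A, C ⊆ idxV n m → A ⊆ idxV n m \ C →
      opProd (N 1 0) w (idxU n m) (((β1 * β2)⁻¹) ^ ((idxV n m \ C) \ A).card •
        opProd (N 1 0) w ((idxV n m \ C) \ A) vac) =
      (β1 * β2) ^ n • (((β1 * β2)⁻¹) ^ ((Finset.univ \ C) \ A).card •
        opProd (N 1 0) w ((Finset.univ \ C) \ A) vac) := by
    intro C A hC hA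
    have hd : Disjoint (idxU n m) ((idxV n m \ C) \ A) :=
      disj_split _ (Finset.sdiff_subset.trans Finset.sdiff_subset)
    rw [univ_split2 A C hC hA, opProd_union _ (hCommSame 1 0) _ _ _ hd,
      Finset.card_union_of_disjoint hd, hcardU, map_smul, smul_smul, Module.End.mul_apply]
    congr 1
    rw [pow_add, ← mul_assoc, ← mul_pow, mul_inv_cancel₀ (mul_ne_zero hβ1 hβ2), one_pow, one_mul]
  have expand : ∀ C A, C ⊆ idxV n m → A ⊆ idxV n m \ C →
      ((-β2⁻¹) ^ C.card * (∏ i ∈ C, lam1 (w i)) * fSS c w (idxV n m \ C) C) •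
      ((-β1⁻¹) ^ A.card * (∏ i ∈ A, lam2 (w i)) * fSS c w A ((idxV n m \ C) \ A)) •
      opProd (N 1 0) w (idxU n m) (((β1 * β2)⁻¹) ^ ((idxV n m \ C) \ A).card •
        opProd (N 1 0) w ((idxV n m \ C) \ A) vac) =
      ∑ B ∈ ((Finset.univ \ C) \ A).powerset, ∑ D ∈ (((Finset.univ \ C) \ A) \ B).powerset,
        coef5 c β1 β2 lam1 lam2 u w A B C D ((((Finset.univ \ C) \ A) \ B) \ D) •
          opProd (N 0 1) w ((((Finset.univ \ C) \ A) \ B) \ D) vac := by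
    intro C A hC hA
    rw [merge C A hC hA, E2, Finset.smul_sum, Finset.smul_sum, Finset.smul_sum]
    refine Finset.sum_congr rfl fun B hB => ?_
    rw [E1, Finset.smul_sum, Finset.smul_sum, Finset.smul_sum, Finset.smul_sum]
    refine Finset.sum_congr rfl fun D hD => ?_
    rw [Finset.mem_powerset] at hB hD
    rw [smul_smul, smul_smul, smul_smul, smul_smul]
    congr 1
    rw [← lhs_coef c β1 β2 lam1 lam2 u w (idxV n m) A B C D
      (hA.trans (Finset.sdiff_subset_sdiff (Finset.subset_univ _) subset_rfl)) hB hD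
      (phi_eq c u v hgen A C hC hA) (psi_eq c u v hgen C hC)]
    ring
  have lhs : (opProd (N 1 0) u Finset.univ * opProd (N 0 1) v Finset.univ) vac =
      ∑ C ∈ (idxV n m).powerset, ∑ A ∈ (idxV n m \ C).powerset,
      ∑ B ∈ ((Finset.univ \ C) \ A).powerset, ∑ D ∈ (((Finset.univ \ C) \ A) \ B).powerset,
        coef5 c β1 β2 lam1 lam2 u w A B C D ((((Finset.univ \ C) \ A) \ B) \ D) •
          opProd (N 0 1) w ((((Finset.univ \ C) \ A) \ B) \ D) vac := by
    rw [hU, hV, Module.End.mul_apply, E4, map_sum]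
    refine Finset.sum_congr rfl fun C hC => ?_
    rw [Finset.mem_powerset] at hC
    rw [E3, map_smul, map_sum, Finset.smul_sum]
    refine Finset.sum_congr rfl fun A hA => ?_
    rw [Finset.mem_powerset] at hA
    rw [map_smul]
    exact expand C A hC hA
  rw [lhs, sum_extend (fun A C => ∑ B ∈ ((Finset.univ \ C) \ A).powerset,
      ∑ D ∈ (((Finset.univ \ C) \ A) \ B).powerset,
        coef5 c β1 β2 lam1 lam2 u w A B C D ((((Finset.univ \ C) \ A) \ B) \ D) •
          opProd (N 0 1) w ((((Finset.univ \ C) \ A) \ B) \ D) vac)]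
  rotate_left
  · intro A C h
    refine Finset.sum_eq_zero fun B _ => Finset.sum_eq_zero fun D _ => ?_
    have : coef5 c β1 β2 lam1 lam2 u w A B C D ((((Finset.univ \ C) \ A) \ B) \ D) = 0 := by
      unfold coef5
      rw [hwdef, phi_zero c u v A h]
      ring
    rw [this, zero_smul]
  · intro A C h
    refine Finset.sum_eq_zero fun B _ => Finset.sum_eq_zero fun D _ => ?_
    have : coef5 c β1 β2 lam1 lam2 u w A B C D ((((Finset.univ \ C) \ A) \ B) \ D) = 0 := by
      unfold coef5
      rw [hwdef, psi_zero c u v C h]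
      ring
    rw [this, zero_smul]
  rw [sum_reindex (fun A B C D =>
        coef5 c β1 β2 lam1 lam2 u w A B C D ((((Finset.univ \ C) \ A) \ B) \ D) •
          opProd (N 0 1) w ((((Finset.univ \ C) \ A) \ B) \ D) vac)]
  have rhs := sum_parts (p := n + m) (fun I J E =>
    ((-β1) ^ ((n : ℤ) - (I.card : ℤ)) * (-β2) ^ ((n : ℤ) - (J.card : ℤ)) *
              (∏ i ∈ I, lam2 (w i)) * (∏ i ∈ J, lam1 (w i)) *
              KIz c 1 u (fun i => restr w I i + c) * KIzBar c 1 u (fun i => restr w J i - c) *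
              fSS c w I J * fSS c w I E * fSS c w E J) • opProd (N 0 1) w E vac)
  rw [rhs]
  refine Finset.sum_congr rfl fun I _ => Finset.sum_congr rfl fun J _ => ?_
  rw [rhs_coef c β1 β2 hc hβ1 hβ2 lam1 lam2 u w hgen, Finset.sum_smul]
  refine Finset.sum_congr rfl fun A hA => ?_
  rw [Finset.sum_smul]
  refine Finset.sum_congr rfl fun C hC => ?_
  rw [Finset.mem_powerset] at hA hC
  rw [← set_aux I J A C hA hC]
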